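/- Let E be a real Banach space, F a real Hilbert space, and f : E → F an ε-nearisometry for some ε ≥ 0 with f 0 = 0. Then there is a linear isometry T : E → F such that |P(f x) − T x| ≤ 2ε for all x ∈ E, where P : F → T(E) is the orthogonal projection onto the (closed) range of T. Moreover, if f is surjective, or if E and F have the same finite dimension, then T is surjective and |T x − f x| ≤ 2ε for all x ∈ E. -/

import Mathlib

open Filter Metric Bornology

/-- `f` is an `ε`-nearisometry on `A`. -/
def IsNearisometryOn {E F : Type*} [NormedAddCommGroup E] [NormedAddCommGroup F]
    (f : E → F) (A : Set E) (ε : ℝ) : Prop :=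
  ∀ x ∈ A, ∀ y ∈ A, |‖f x - f y‖ - ‖x - y‖| ≤ ε

/-- The orthogonal projection of `F` onto the (closed) range `T(E)` of a linear isometry
`T : E →ₗᵢ[ℝ] F` from a complete space, as a map `F → F`. -/
noncomputable def projOntoRange {E F : Type*} [NormedAddCommGroup E] [NormedSpace ℝ E]
    [CompleteSpace E] [NormedAddCommGroup F] [InnerProductSpace ℝ F]
    (T : E →ₗᵢ[ℝ] F) (v : F) : F :=
  haveI : CompleteSpace (⊤ : Submodule ℝ E) :=
    completeSpace_coe_iff_isComplete.2 (by simpa using completeSpace_iff_isComplete_univ.1 ‹_›)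
  haveI : CompleteSpace (Submodule.map T.toLinearMap ⊤) := T.completeSpace_map ⊤
  (Submodule.orthogonalProjectionOnto (Submodule.map T.toLinearMap ⊤) v : F)


theorem hu_proj {E F : Type*} [NormedAddCommGroup E] [NormedSpace ℝ E]
    [CompleteSpace E] [NormedAddCommGroup F] [InnerProductSpace ℝ F]
    (T : E →ₗᵢ[ℝ] F) (v : F) :
    (∃ z, T z = projOntoRange T v) ∧ ∀ y, inner ℝ (v - projOntoRange T v) (T y) = 0 := by
  have h1 : CompleteSpace (⊤ : Submodule ℝ E) :=
    completeSpace_coe_iff_isComplete.2 (by simpa using completeSpace_iff_isComplete_univ.1 ‹_›)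
  have h2 : CompleteSpace (Submodule.map T.toLinearMap ⊤) := T.completeSpace_map ⊤
  constructor
  · have := (Submodule.orthogonalProjectionOnto (Submodule.map T.toLinearMap ⊤) v).2
    obtain ⟨z, -, hz⟩ := Submodule.mem_map.1 this
    exact ⟨z, hz⟩
  · intro y
    exact Submodule.starProjection_inner_eq_zero (K := Submodule.map T.toLinearMap ⊤) v (T y)
      (Submodule.mem_map.2 ⟨y, trivial, rfl⟩)

theorem hu_step {E F : Type*} [NormedAddCommGroup E] [NormedSpace ℝ E]
    [NormedAddCommGroup F] [InnerProductSpace ℝ F]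
    (f : E → F) (ε : ℝ) (hε : 0 ≤ ε)
    (hf : IsNearisometryOn f Set.univ ε) (hf0 : f 0 = 0) (x : E) :
    ‖f x - (1 / 2 : ℝ) • f ((2 : ℝ) • x)‖ ^ 2 ≤ 3 * ‖x‖ * ε + ε ^ 2 := by
  have h1 := abs_le.1 (hf x trivial 0 trivial)
  have h2 := abs_le.1 (hf ((2 : ℝ) • x) trivial 0 trivial)
  have h3 := abs_le.1 (hf ((2 : ℝ) • x) trivial x trivial)
  have e : (2 : ℝ) • x - x = x := by rw [two_smul]; abel
  rw [e] at h3
  simp only [hf0, sub_zero, norm_smul, Real.norm_ofNat] at h1 h2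
  set a := f x
  set b := f ((2 : ℝ) • x)
  have i1 : ‖a - (1 / 2 : ℝ) • b‖ ^ 2 = ‖a‖ ^ 2 / 2 + ‖b - a‖ ^ 2 / 2 - ‖b‖ ^ 2 / 4 := by
    rw [norm_sub_sq_real, norm_sub_sq_real, norm_smul, inner_smul_right, real_inner_comm a b]
    norm_num
    ring
  have hx := norm_nonneg x
  have j1 : ‖a‖ ^ 2 ≤ (‖x‖ + ε) ^ 2 := pow_le_pow_left₀ (norm_nonneg _) (by linarith) 2
  have j2 : ‖b - a‖ ^ 2 ≤ (‖x‖ + ε) ^ 2 := pow_le_pow_left₀ (norm_nonneg _) (by linarith) 2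
  have j3 : 4 * ‖x‖ ^ 2 - 4 * ‖x‖ * ε ≤ ‖b‖ ^ 2 := by
    rcases le_total ε (2 * ‖x‖) with h | h
    · have : (2 * ‖x‖ - ε) ^ 2 ≤ ‖b‖ ^ 2 := pow_le_pow_left₀ (by linarith) (by linarith) 2
      nlinarith [sq_nonneg ε]
    · nlinarith [sq_nonneg ‖b‖]
  nlinarith

theorem hu_lim {E F : Type*} [NormedAddCommGroup E] [NormedSpace ℝ E]
    [NormedAddCommGroup F] [InnerProductSpace ℝ F] [CompleteSpace F]
    (f : E → F) (ε : ℝ) (hε : 0 ≤ ε)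
    (hf : IsNearisometryOn f Set.univ ε) (hf0 : f 0 = 0) (x : E) :
    ∃ l, Tendsto (fun n : ℕ => ((1 / 2 : ℝ) ^ n) • f ((2 : ℝ) ^ n • x)) atTop (nhds l) := by
  apply cauchySeq_tendsto_of_complete
  apply cauchySeq_of_le_geometric (√(1 / 2)) (√(3 * ‖x‖ * ε + ε ^ 2))
  · rw [Real.sqrt_lt' one_pos]; norm_num
  intro n
  have h := hu_step f ε hε hf hf0 ((2 : ℝ) ^ n • x)
  have e : (2 : ℝ) • (2 : ℝ) ^ n • x = (2 : ℝ) ^ (n + 1) • x := by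
    rw [smul_smul, pow_succ, mul_comm]
  rw [e, norm_smul] at h
  have e2 : dist (((1 / 2 : ℝ) ^ n) • f ((2 : ℝ) ^ n • x))
      (((1 / 2 : ℝ) ^ (n + 1)) • f ((2 : ℝ) ^ (n + 1) • x)) =
      (1 / 2 : ℝ) ^ n * ‖f ((2 : ℝ) ^ n • x) - (1 / 2 : ℝ) • f ((2 : ℝ) ^ (n + 1) • x)‖ := by
    rw [dist_eq_norm, pow_succ (1 / 2 : ℝ) n, mul_smul, ← smul_sub, norm_smul]
    simp
  rw [e2]
  refine le_of_abs_le <| abs_le_of_sq_le_sq ?_ (by positivity)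
  rw [mul_pow, mul_pow, pow_right_comm (√(1 / 2)) n 2, Real.sq_sqrt (by positivity),
    Real.sq_sqrt (by positivity)]
  have hp : (1 / 2 : ℝ) ^ n * 2 ^ n = 1 := by rw [← mul_pow]; norm_num
  have hp1 : (1 / 2 : ℝ) ^ n ≤ 1 := pow_le_one₀ (by norm_num) (by norm_num)
  have hp0 : 0 < (1 / 2 : ℝ) ^ n := by positivity
  have hn : ‖(2 : ℝ) ^ n‖ = 2 ^ n := by simp
  rw [hn] at h
  calc ((1 / 2 : ℝ) ^ n) ^ 2 * _ ≤ ((1 / 2 : ℝ) ^ n) ^ 2 * (3 * (2 ^ n * ‖x‖) * ε + ε ^ 2) := by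
        gcongr
    _ = 3 * ‖x‖ * ε * ((1 / 2 : ℝ) ^ n * 2 ^ n) * (1 / 2 : ℝ) ^ n
        + ε ^ 2 * ((1 / 2 : ℝ) ^ n) * (1 / 2 : ℝ) ^ n := by ring
    _ ≤ 3 * ‖x‖ * ε * 1 * (1 / 2 : ℝ) ^ n + ε ^ 2 * 1 * (1 / 2 : ℝ) ^ n := by
        rw [hp]; gcongr
    _ = _ := by ring

theorem hu_busemann {F : Type*} [NormedAddCommGroup F] [InnerProductSpace ℝ F]
    (a : ℕ → F) (w v : F) (hw : w ≠ 0)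
    (ha : Tendsto (fun n : ℕ => ((1 / 2 : ℝ) ^ n) • a n) atTop (nhds w)) :
    Tendsto (fun n => ‖a n‖ - ‖a n - v‖) atTop (nhds (inner ℝ w v / ‖w‖)) := by
  have hw' : 0 < ‖w‖ := norm_pos_iff.2 hw
  have hp : Tendsto (fun n : ℕ => (1 / 2 : ℝ) ^ n) atTop (nhds 0) :=
    tendsto_pow_atTop_nhds_zero_of_lt_one (by norm_num) (by norm_num)
  have t1 : Tendsto (fun n : ℕ => ((1 / 2 : ℝ) ^ n) • a n - ((1 / 2 : ℝ) ^ n) • v) atTop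
      (nhds (w - (0 : ℝ) • v)) := ha.sub (hp.smul_const v)
  have hs : Tendsto (fun n : ℕ => ‖((1 / 2 : ℝ) ^ n) • a n‖ +
      ‖((1 / 2 : ℝ) ^ n) • a n - ((1 / 2 : ℝ) ^ n) • v‖) atTop (nhds (‖w‖ + ‖w - (0 : ℝ) • v‖)) :=
    ha.norm.add t1.norm
  have hnum : Tendsto (fun n : ℕ => 2 * inner ℝ (((1 / 2 : ℝ) ^ n) • a n) v
      - (1 / 2 : ℝ) ^ n * ‖v‖ ^ 2) atTop (nhds (2 * inner ℝ w v - 0 * ‖v‖ ^ 2)) :=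
    ((ha.inner tendsto_const_nhds).const_mul 2).sub (hp.mul_const _)
  have hq := hnum.div hs (by simp; positivity)
  have e : (2 * inner ℝ w v - 0 * ‖v‖ ^ 2) / (‖w‖ + ‖w - (0 : ℝ) • v‖) = inner ℝ w v / ‖w‖ := by
    simp only [zero_mul, zero_smul, sub_zero]
    field_simp
    ring
  rw [e] at hq
  refine hq.congr' ?_
  have hpos := ha.norm.eventually_const_lt hw'
  filter_upwards [hpos] with n hn
  have hp0 : 0 < (1 / 2 : ℝ) ^ n := by positivity
  simp only [Pi.div_apply]
  rw [← smul_sub, norm_smul, norm_smul, inner_smul_left]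
  rw [norm_smul] at hn
  have hnn : ‖(1 / 2 : ℝ) ^ n‖ = (1 / 2 : ℝ) ^ n := Real.norm_of_nonneg hp0.le
  rw [hnn] at hn ⊢
  set c := (1 / 2 : ℝ) ^ n
  have hI := norm_sub_sq_real (a n) v
  rw [div_eq_iff (by positivity)]
  simp only [conj_trivial]
  linear_combination c * hI

theorem hu_isom {E F : Type*}
    [NormedAddCommGroup E] [NormedSpace ℝ E]
    [NormedAddCommGroup F] [InnerProductSpace ℝ F] [CompleteSpace F]
    (f : E → F) (ε : ℝ) (hε : 0 ≤ ε)
    (hf : IsNearisometryOn f Set.univ ε) (hf0 : f 0 = 0) :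
    ∃ T : E →ₗᵢ[ℝ] F, ∀ x,
      Tendsto (fun n : ℕ => ((1 / 2 : ℝ) ^ n) • f ((2 : ℝ) ^ n • x)) atTop (nhds (T x)) := by
  choose g hg using hu_lim f ε hε hf hf0
  have hp : Tendsto (fun n : ℕ => (1 / 2 : ℝ) ^ n) atTop (nhds 0) :=
    tendsto_pow_atTop_nhds_zero_of_lt_one (by norm_num) (by norm_num)
  have hi : Isometry g := by
    apply Isometry.of_dist_eq
    intro x y
    have h1 := ((hg x).sub (hg y)).norm
    rw [dist_eq_norm, dist_eq_norm]
    refine tendsto_nhds_unique h1 ?_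
    have h2 : Tendsto (fun n : ℕ => (1 / 2 : ℝ) ^ n * ε) atTop (nhds 0) := by
      simpa using hp.mul_const ε
    rw [tendsto_iff_dist_tendsto_zero]
    refine squeeze_zero (fun _ => dist_nonneg) (fun n => ?_) h2
    have h3 := hf ((2 : ℝ) ^ n • x) trivial ((2 : ℝ) ^ n • y) trivial
    have hp0 : 0 < (1 / 2 : ℝ) ^ n := by positivity
    have hpp : (1 / 2 : ℝ) ^ n * 2 ^ n = 1 := by rw [← mul_pow]; norm_num
    have hnn : ‖(1 / 2 : ℝ) ^ n‖ = (1 / 2 : ℝ) ^ n := Real.norm_of_nonneg hp0.le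
    have hn : ‖(2 : ℝ) ^ n‖ = 2 ^ n := by simp
    rw [← smul_sub, norm_smul, hn] at h3
    rw [← smul_sub, norm_smul, hnn, Real.dist_eq]
    have e : (1 / 2 : ℝ) ^ n * ‖f ((2 : ℝ) ^ n • x) - f ((2 : ℝ) ^ n • y)‖ - ‖x - y‖ =
      (1 / 2 : ℝ) ^ n * (‖f ((2 : ℝ) ^ n • x) - f ((2 : ℝ) ^ n • y)‖ - 2 ^ n * ‖x - y‖) := by
      linear_combination (‖x - y‖) * hpp
    rw [e, abs_mul, abs_of_pos hp0]
    gcongr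
  have hg0 : g 0 = 0 := by
    refine tendsto_nhds_unique (hg 0) ?_
    simp [hf0]
  let A := hi.affineIsometryOfStrictConvexSpace
  have hA : ∀ x, A x = g x := fun x => rfl
  refine ⟨A.linearIsometry, fun x => ?_⟩
  have : A.linearIsometry x = g x := by
    have := A.map_vadd 0 x
    simp only [hA, hg0, vadd_eq_add, add_zero] at this
    exact this.symm
  rw [this]
  exact hg x

theorem hu_inner {E F : Type*}
    [NormedAddCommGroup E] [NormedSpace ℝ E]
    [NormedAddCommGroup F] [InnerProductSpace ℝ F]
    (f : E → F) (ε : ℝ)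
    (hf : IsNearisometryOn f Set.univ ε) (hf0 : f 0 = 0) (T : E →ₗᵢ[ℝ] F)
    (hT : ∀ x,
      Tendsto (fun n : ℕ => ((1 / 2 : ℝ) ^ n) • f ((2 : ℝ) ^ n • x)) atTop (nhds (T x)))
    (x y : E) : inner ℝ (f x - T x) (T y) ≤ 2 * ε * ‖T y‖ := by
  by_cases hy : T y = 0
  · simp [hy]
  have hy' : 0 < ‖T y‖ := norm_pos_iff.2 hy
  have h1 := hu_busemann (fun n => f ((2 : ℝ) ^ n • y)) (T y) (f x) hy (hT y)
  have h2 := hu_busemann (fun n => T ((2 : ℝ) ^ n • y)) (T y) (T x) hy (by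
    refine tendsto_const_nhds.congr (fun n => ?_)
    have hpp : (1 / 2 : ℝ) ^ n * 2 ^ n = 1 := by rw [← mul_pow]; norm_num
    rw [map_smul, smul_smul, hpp, one_smul])
  have h3 := le_of_tendsto' (h1.sub h2) (b := 2 * ε) (fun n => by
    have k1 := abs_le.1 (hf ((2 : ℝ) ^ n • y) trivial x trivial)
    have k2 := abs_le.1 (hf ((2 : ℝ) ^ n • y) trivial 0 trivial)
    rw [hf0, sub_zero, sub_zero] at k2
    rw [← map_sub, T.norm_map, T.norm_map]
    linarith)
  rw [← sub_div, div_le_iff₀ hy'] at h3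
  rw [inner_sub_left, real_inner_comm, real_inner_comm (T y) (T x)]
  exact h3

theorem hyersUlam {E F : Type*}
    [NormedAddCommGroup E] [NormedSpace ℝ E] [CompleteSpace E]
    [NormedAddCommGroup F] [InnerProductSpace ℝ F] [CompleteSpace F]
    (f : E → F) (ε : ℝ) (hε : 0 ≤ ε)
    (hf : IsNearisometryOn f Set.univ ε) (hf0 : f 0 = 0) :
    ∃ T : E →ₗᵢ[ℝ] F,
      (∀ x : E, ‖projOntoRange T (f x) - T x‖ ≤ 2 * ε) ∧
      ((Function.Surjective f ∨
          (FiniteDimensional ℝ E ∧ FiniteDimensional ℝ F ∧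
            Module.finrank ℝ E = Module.finrank ℝ F)) →
        Function.Surjective T ∧ ∀ x : E, ‖T x - f x‖ ≤ 2 * ε) := by
  obtain ⟨T, hT⟩ := hu_isom f ε hε hf hf0
  have main : ∀ x : E, ‖projOntoRange T (f x) - T x‖ ≤ 2 * ε := by
    intro x
    obtain ⟨⟨z, hz⟩, ho⟩ := hu_proj T (f x)
    have h := hu_inner f ε hf hf0 T hT x (z - x)
    have h0 := ho (z - x)
    rw [map_sub, hz] at h h0
    set p := projOntoRange T (f x)
    have e : f x - T x = (f x - p) + (p - T x) := by abel
    rw [e, inner_add_left, h0, zero_add, real_inner_self_eq_norm_sq] at h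
    by_contra hc
    push Not at hc
    nlinarith
  refine ⟨T, main, fun hs => ?_⟩
  have hsurj : Function.Surjective T := by
    rcases hs with hs | ⟨h1, h2, h3⟩
    · intro w
      obtain ⟨⟨z, hz⟩, ho⟩ := hu_proj T w
      refine ⟨z, ?_⟩
      rw [hz]
      set u := w - projOntoRange T w with hu
      suffices u = 0 from (sub_eq_zero.1 this).symm
      by_contra hne
      have hpos : 0 < ‖u‖ := norm_pos_iff.2 hne
      obtain ⟨n, hn⟩ := exists_nat_gt (3 * ε / ‖u‖)
      rw [div_lt_iff₀ hpos] at hn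
      obtain ⟨x, hx⟩ := hs ((n : ℝ) • u)
      have hm := main x
      have hp0 : projOntoRange T (f x) = 0 := by
        obtain ⟨⟨z', hz'⟩, ho'⟩ := hu_proj T (f x)
        have := ho' z'
        rw [hz', inner_sub_left, hx, inner_smul_left, ← hx, ← hz', ho z', mul_zero, zero_sub,
          neg_eq_zero, inner_self_eq_zero] at this
        rw [← hz', this]
      rw [hp0, zero_sub, norm_neg, T.norm_map] at hm
      have k := abs_le.1 (hf x trivial 0 trivial)
      rw [hf0, sub_zero, sub_zero, hx, norm_smul, Real.norm_natCast] at k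
      linarith
    · exact (LinearMap.injective_iff_surjective_of_finrank_eq_finrank
        (f := T.toLinearMap) h3).1 T.injective
  refine ⟨hsurj, fun x => ?_⟩
  have hp : projOntoRange T (f x) = f x := by
    obtain ⟨-, ho⟩ := hu_proj T (f x)
    obtain ⟨y, hy⟩ := hsurj (f x - projOntoRange T (f x))
    have := ho y
    rw [hy, inner_self_eq_zero] at this
    exact (sub_eq_zero.1 this).symm
  have := main x
  rwa [hp, norm_sub_rev] at this
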